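/- There exists a sequence q₁(n) with q₁(n) ~ 2^n such that D(n, q₁(n)) ≲ 3n as n → ∞. -/

import Mathlib

open Filter

namespace Rev

/-- A reversible gate `TOF(I; t)` on `N` lines: a control set `I` with `|I| ≤ 2`
and a target `t ∉ I`.  `|I| = 0, 1, 2` correspond to NOT, CNOT, C²NOT. -/
structure Gate (N : ℕ) where
  I : Finset (Fin N)
  t : Fin N
  card_le : I.card ≤ 2
  t_not_mem : t ∉ I

/-- The transformation computed by a gate: the target coordinate is XORed with the
conjunction of the control coordinates (the empty conjunction is `1`). -/
def Gate.apply {N : ℕ} (g : Gate N) (x : Fin N → Bool) : Fin N → Bool :=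
  fun j => if j = g.t then xor (x g.t) (decide (∀ i ∈ g.I, x i = true)) else x j

/-- A reversible circuit: a finite sequence (composition) of gates. -/
abbrev Circuit (N : ℕ) := List (Gate N)

/-- The transformation computed by a circuit (composition of the gate maps). -/
def Circuit.eval {N : ℕ} (S : Circuit N) (x : Fin N → Bool) : Fin N → Bool :=
  S.foldl (fun v g => g.apply v) x

/-- Gate complexity: the number of gates. -/
def Circuit.L {N : ℕ} (S : Circuit N) : ℕ := S.length

/-- The number of NOT and CNOT gates. -/
def Circuit.LC {N : ℕ} (S : Circuit N) : ℕ := (S.filter fun g => g.I.card ≤ 1).length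

/-- The number of C²NOT (Toffoli) gates. -/
def Circuit.LT {N : ℕ} (S : Circuit N) : ℕ := (S.filter fun g => g.I.card = 2).length

/-- The quantum weight, given weights `WC` for NOT/CNOT gates and `WT` for C²NOT gates. -/
noncomputable def Circuit.W {N : ℕ} (WC WT : ℝ) (S : Circuit N) : ℝ :=
  WC * S.LC + WT * S.LT

/-- A circuit has depth one if the sets `{t} ∪ I` of its gates are pairwise disjoint. -/
def DepthOne {N : ℕ} (S : Circuit N) : Prop :=
  S.Pairwise fun g₁ g₂ => Disjoint (insert g₁.t g₁.I) (insert g₂.t g₂.I)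

/-- The depth of a circuit: the minimal number of depth-one sub-circuits whose
concatenation is the circuit. -/
noncomputable def Circuit.D {N : ℕ} (S : Circuit N) : ℕ :=
  sInf {d | ∃ parts : List (Circuit N),
    parts.length = d ∧ parts.flatten = S ∧ ∀ p ∈ parts, DepthOne p}

/-- Padding an input vector with zero values on `q` additional inputs. -/
def pad {n q : ℕ} (x : Fin n → Bool) : Fin (n + q) → Bool :=
  fun i => if h : (i : ℕ) < n then x ⟨i, h⟩ else false

/-- A circuit `S` with `n + q` inputs implements `f : 𝔹ⁿ → 𝔹ᵐ` with `q` additional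
inputs: there is a permutation `π` of the output positions such that for every `x`,
applying `S` to `⟨x, 0, …, 0⟩` and permuting the coordinates by `π` yields a vector
whose first `m` coordinates equal `f x`. -/
def Implements {n q m : ℕ} (S : Circuit (n + q)) (f : (Fin n → Bool) → Fin m → Bool) :
    Prop :=
  m ≤ n + q ∧ ∃ π : Equiv.Perm (Fin (n + q)), ∀ x : Fin n → Bool, ∀ j : Fin m,
    ∀ hj : (j : ℕ) < n + q, Circuit.eval S (pad x) (π ⟨j, hj⟩) = f x j

/-- `f ∈ F(n, q)`: `f : 𝔹ⁿ → 𝔹ⁿ` is implementable with `q` additional inputs. -/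
def Implementable (n q : ℕ) (f : (Fin n → Bool) → Fin n → Bool) : Prop :=
  ∃ S : Circuit (n + q), Implements S f

/-- `L(f, q)`: minimal gate complexity of a circuit implementing `f` with `q`
additional inputs. -/
noncomputable def Lmin (n q : ℕ) (f : (Fin n → Bool) → Fin n → Bool) : ℕ :=
  sInf {l | ∃ S : Circuit (n + q), Implements S f ∧ S.L = l}

/-- The Shannon gate complexity function `L(n, q)`. -/
noncomputable def Lsh (n q : ℕ) : ℕ :=
  sSup {l | ∃ f, Implementable n q f ∧ Lmin n q f = l}

/-- `D(f, q)`: minimal depth of a circuit implementing `f` with `q` additional inputs. -/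
noncomputable def Dmin (n q : ℕ) (f : (Fin n → Bool) → Fin n → Bool) : ℕ :=
  sInf {d | ∃ S : Circuit (n + q), Implements S f ∧ S.D = d}

/-- The Shannon depth function `D(n, q)`. -/
noncomputable def Dsh (n q : ℕ) : ℕ :=
  sSup {d | ∃ f, Implementable n q f ∧ Dmin n q f = d}

/-- `W(f, q)`: minimal quantum weight of a circuit implementing `f` with `q`
additional inputs. -/
noncomputable def Wmin (WC WT : ℝ) (n q : ℕ) (f : (Fin n → Bool) → Fin n → Bool) : ℝ :=
  sInf {w | ∃ S : Circuit (n + q), Implements S f ∧ Circuit.W WC WT S = w}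

/-- The Shannon quantum weight function `W(n, q)`. -/
noncomputable def Wsh (WC WT : ℝ) (n q : ℕ) : ℝ :=
  sSup {w | ∃ f, Implementable n q f ∧ Wmin WC WT n q f = w}

/-- `a ~ b`: `a n / b n → 1`. -/
def AsympEquiv (a b : ℕ → ℝ) : Prop :=
  Tendsto (fun n => a n / b n) atTop (nhds 1)

/-- `a ≲ b`: `limsup (a n / b n) ≤ 1`. -/
def AsympLE (a b : ℕ → ℝ) : Prop :=
  Filter.limsup (fun n => a n / b n) atTop ≤ 1

/-- A growing function: nondecreasing and tending to `+∞`. -/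
def Growing (φ : ℕ → ℝ) : Prop :=
  Monotone φ ∧ Tendsto φ atTop atTop

/-- `2 ^ (n - ⌈n / φ(n)⌉)` as a real number. -/
noncomputable def pow2e (φ : ℕ → ℝ) (n : ℕ) : ℝ :=
  (2 : ℝ) ^ ((n : ℤ) - ⌈(n : ℝ) / φ n⌉)

end Rev

namespace Rev

open Function

/-! ### Layers on arbitrary line types -/

def Step {X ι : Type} (v w : X → ι → Bool) : Prop :=
  ∃ (K : Type) (_ : Fintype K) (t : K → ι) (c : K → Finset ι),
    (∀ k, (c k).card ≤ 2) ∧ (∀ k, t k ∉ c k) ∧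
    (∀ k k', k ≠ k' → t k ≠ t k' ∧ t k ∉ c k' ∧ Disjoint (c k) (c k')) ∧
    (∀ x k, w x (t k) = xor (v x (t k)) (decide (∀ i ∈ c k, v x i = true))) ∧
    (∀ x i, (∀ k, t k ≠ i) → w x i = v x i)

inductive Reach {X ι : Type} : ℕ → (X → ι → Bool) → (X → ι → Bool) → Prop
  | refl (v) : Reach 0 v v
  | head {d v u w} : Step v u → Reach d u w → Reach (d + 1) v w

theorem Reach.trans {X ι : Type} {d d' : ℕ} {u v w : X → ι → Bool}
    (h : Reach d u v) (h' : Reach d' v w) : Reach (d + d') u w := by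
  induction h with
  | refl v => simpa using h'
  | head s _ ih =>
    have := Reach.head s (ih h')
    convert this using 1
    omega

theorem Reach.tail {X ι : Type} {d : ℕ} {u v w : X → ι → Bool}
    (h : Reach d u v) (h' : Step v w) : Reach (d + 1) u w :=
  h.trans (Reach.head h' (Reach.refl _))

theorem Step.map {X ι ι' : Type} {v w : X → ι → Bool} (h : Step v w) (e : ι → ι')
    (he : Injective e) (v' : X → ι' → Bool) (hv : ∀ x i, v' x (e i) = v x i) :
    Step v' (fun x => Function.extend e (w x) (v' x)) := by
  obtain ⟨K, hK, t, c, h1, h2, h3, h4, h5⟩ := h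
  refine ⟨K, hK, fun k => e (t k), fun k => (c k).map ⟨e, he⟩, ?_, ?_, ?_, ?_, ?_⟩
  · intro k; simpa using h1 k
  · intro k hk
    simp only [Finset.mem_map, Embedding.coeFn_mk] at hk
    obtain ⟨a, ha, hae⟩ := hk
    exact h2 k (he hae ▸ ha)
  · intro k k' hkk
    obtain ⟨a1, a2, a3⟩ := h3 k k' hkk
    refine ⟨fun h => a1 (he h), ?_, ?_⟩
    · intro hk
      simp only [Finset.mem_map, Embedding.coeFn_mk] at hk
      obtain ⟨a, ha, hae⟩ := hk
      exact a2 (he hae ▸ ha)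
    · exact (Finset.disjoint_map _).2 a3
  · intro x k
    simp only [he.extend_apply, h4, hv, Finset.mem_map, Embedding.coeFn_mk, forall_exists_index,
      and_imp, forall_apply_eq_imp_iff₂]
  · intro x i hi
    by_cases hr : ∃ a, e a = i
    · obtain ⟨a, rfl⟩ := hr
      simp only [he.extend_apply, hv]
      exact h5 x a (fun k hk => hi k (congrArg e hk))
    · simp [Function.extend_apply' _ _ _ hr]

theorem Reach.map {X ι ι' : Type} {d : ℕ} {v w : X → ι → Bool} (h : Reach d v w) (e : ι → ι')
    (he : Injective e) (v' : X → ι' → Bool) (hv : ∀ x i, v' x (e i) = v x i) :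
    Reach d v' (fun x => Function.extend e (w x) (v' x)) := by
  induction h generalizing v' with
  | refl v =>
    have : (fun x => Function.extend e (v x) (v' x)) = v' := by
      funext x i
      by_cases hr : ∃ a, e a = i
      · obtain ⟨a, rfl⟩ := hr
        simp only [he.extend_apply, hv]
      · simp [Function.extend_apply' _ _ _ hr]
    rw [this]
    exact Reach.refl _
  | head s _ ih =>
    rename_i d v u w _
    have h1 := s.map e he v' hv
    have h2 := ih (fun x => Function.extend e (u x) (v' x)) (fun x i => by simp [he.extend_apply])
    refine Reach.head h1 ?_
    convert h2 using 1
    funext x i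
    by_cases hr : ∃ a, e a = i
    · obtain ⟨a, rfl⟩ := hr
      simp only [he.extend_apply]
    · simp [Function.extend_apply' _ _ _ hr]

theorem step_one {X ι K : Type} [Fintype K] (v w : X → ι → Bool) (t a : K → ι)
    (ht : Injective t) (ha : Injective a) (hta : ∀ k k', t k ≠ a k')
    (h4 : ∀ x k, w x (t k) = xor (v x (t k)) (v x (a k)))
    (h5 : ∀ x i, (∀ k, t k ≠ i) → w x i = v x i) : Step v w := by
  refine ⟨K, inferInstance, t, fun k => {a k}, ?_, ?_, ?_, ?_, h5⟩
  · intro k; simp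
  · intro k; simpa using hta k k
  · intro k k' h
    refine ⟨fun hh => h (ht hh), by simpa using hta k k', ?_⟩
    simpa using fun hh => h (ha hh)
  · intro x k; simp [h4]

theorem step_two {X ι K : Type} [Fintype K] (v w : X → ι → Bool) (t a b : K → ι)
    (ht : Injective t) (ha : Injective a) (hb : Injective b)
    (hta : ∀ k k', t k ≠ a k') (htb : ∀ k k', t k ≠ b k') (hab : ∀ k k', a k ≠ b k')
    (h4 : ∀ x k, w x (t k) = xor (v x (t k)) (v x (a k) && v x (b k)))
    (h5 : ∀ x i, (∀ k, t k ≠ i) → w x i = v x i) : Step v w := by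
  classical
  refine ⟨K, inferInstance, t, fun k => {a k, b k}, ?_, ?_, ?_, ?_, h5⟩
  · intro k; exact Finset.card_le_two
  · intro k; simpa using ⟨hta k k, htb k k⟩
  · intro k k' h
    refine ⟨fun hh => h (ht hh), by simpa using ⟨hta k k', htb k k'⟩, ?_⟩
    rw [Finset.disjoint_left]
    intro i hi hi'
    simp only [Finset.mem_insert, Finset.mem_singleton] at hi hi'
    rcases hi with rfl | rfl <;> rcases hi' with hi' | hi'
    · exact h (ha hi')
    · exact hab _ _ hi'
    · exact hab _ _ hi'.symm
    · exact h (hb hi')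
  · intro x k; simp [h4]

/-! ### Computations with fresh zero lines -/

def Comp {X κ κ' : Type} (d m : ℕ) (F : X → κ → Bool) (G : X → κ' → Bool) : Prop :=
  ∃ (R : Type) (_ : Fintype R) (d' : ℕ) (w : X → κ ⊕ R → Bool) (out : κ' → κ ⊕ R),
    Fintype.card R ≤ m ∧ d' ≤ d ∧ Injective out ∧
    Reach d' (fun x => Sum.elim (F x) (fun _ => false)) w ∧ ∀ x k, w x (out k) = G x k

theorem Comp.mono {X κ κ' : Type} {d m d' m' : ℕ} {F : X → κ → Bool} {G : X → κ' → Bool}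
    (h : Comp d m F G) (hd : d ≤ d') (hm : m ≤ m') : Comp d' m' F G := by
  obtain ⟨R, hR, e, w, out, h1, h2, h3⟩ := h
  exact ⟨R, hR, e, w, out, h1.trans hm, h2.trans hd, h3⟩

theorem Comp.reindex {X κ κ' κ'' : Type} {d m : ℕ} {F : X → κ → Bool} {G : X → κ' → Bool}
    (h : Comp d m F G) (H : X → κ'' → Bool) (g : κ'' → κ') (hg : Injective g)
    (hH : ∀ x k, G x (g k) = H x k) : Comp d m F H := by
  obtain ⟨R, hR, e, w, out, h1, h2, h3, h4, h5⟩ := h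
  exact ⟨R, hR, e, w, out ∘ g, h1, h2, h3.comp hg, h4, fun x k => by simp [h5, hH]⟩

theorem Comp.trans {X κ κ' κ'' : Type} {d m d' m' : ℕ} {F : X → κ → Bool} {G : X → κ' → Bool}
    {H : X → κ'' → Bool} (h : Comp d m F G) (h' : Comp d' m' G H) :
    Comp (d + d') (m + m') F H := by
  obtain ⟨R, hR, e, w, out, h1, h2, h3, h4, h5⟩ := h
  obtain ⟨R', hR', e', w', out', h1', h2', h3', h4', h5'⟩ := h'
  let i1 : κ ⊕ R → κ ⊕ (R ⊕ R') := Sum.elim Sum.inl (fun r => Sum.inr (Sum.inl r))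
  let i2 : κ' ⊕ R' → κ ⊕ (R ⊕ R') := Sum.elim (fun k => i1 (out k)) (fun r => Sum.inr (Sum.inr r))
  have hi1 : Injective i1 := by
    rintro (a | a) (b | b) hab <;> simp_all [i1]
  have hi1' : ∀ a r, i1 a ≠ Sum.inr (Sum.inr r) := by
    rintro (a | a) r <;> simp [i1]
  have hi2 : Injective i2 := by
    rintro (a | a) (b | b) hab
    · simp only [i2, Sum.elim_inl] at hab
      rw [h3 (hi1 hab)]
    · exact absurd hab (hi1' _ _)
    · exact absurd hab.symm (hi1' _ _)
    · simp_all [i2]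
  have r1 := h4.map i1 hi1 (fun x => Sum.elim (F x) (fun _ => false)) (by
    rintro x (a | a) <;> simp [i1])
  have r2 := h4'.map i2 hi2
    (fun x => Function.extend i1 (w x) (Sum.elim (F x) (fun _ => false))) (by
    rintro x (a | a)
    · simp [i2, hi1.extend_apply, h5]
    · simp only [i2, Sum.elim_inr]
      rw [Function.extend_apply']
      · simp
      · rintro ⟨b, hb⟩; exact hi1' _ _ hb)
  refine ⟨R ⊕ R', inferInstance, e + e', _, i2 ∘ out', ?_, by omega, hi2.comp h3', r1.trans r2, ?_⟩
  · simp; omega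
  · intro x k
    simp [hi2.extend_apply, h5']

/-! ### Conversion to circuits -/

theorem eval_depthOne {N : ℕ} (S : Circuit N) (hS : DepthOne S) (v : Fin N → Bool) :
    (∀ g ∈ S, S.eval v g.t = xor (v g.t) (decide (∀ i ∈ g.I, v i = true))) ∧
    (∀ i, (∀ g ∈ S, g.t ≠ i) → S.eval v i = v i) := by
  induction S generalizing v with
  | nil => simp [Circuit.eval]
  | cons g0 S ih =>
    unfold DepthOne at hS
    rw [List.pairwise_cons] at hS
    obtain ⟨hd, hS'⟩ := hS
    have ev : Circuit.eval (g0 :: S) v = Circuit.eval S (g0.apply v) := rfl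
    obtain ⟨ih1, ih2⟩ := ih hS' (g0.apply v)
    rw [ev]
    refine ⟨?_, ?_⟩
    · intro g hg
      rcases List.mem_cons.1 hg with rfl | hg
      · rw [ih2]
        · simp [Gate.apply]
        · intro g' hg' he
          have := Finset.disjoint_left.1 (hd g' hg') (Finset.mem_insert_self _ _)
          exact this (by rw [← he]; exact Finset.mem_insert_self _ _)
      · rw [ih1 g hg]
        have key : ∀ i ∈ insert g.t g.I, g0.apply v i = v i := by
          intro i hi
          have : i ≠ g0.t := by
            rintro rfl
            exact Finset.disjoint_left.1 (hd g hg) (Finset.mem_insert_self _ _) hi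
          simp [Gate.apply, this]
        rw [key _ (Finset.mem_insert_self _ _)]
        congr 2
        simp only [eq_iff_iff]
        refine forall₂_congr (fun i hi => ?_)
        rw [key i (Finset.mem_insert_of_mem hi)]
    · intro i hi
      rw [ih2 i (fun g hg => hi g (List.mem_cons_of_mem _ hg))]
      have : i ≠ g0.t := fun h => hi g0 List.mem_cons_self h.symm
      simp [Gate.apply, this]

theorem Step.circuit {X : Type} {N : ℕ} {v w : X → Fin N → Bool} (h : Step v w) :
    ∃ S : Circuit N, DepthOne S ∧ ∀ x, S.eval (v x) = w x := by
  obtain ⟨K, hK, t, c, h1, h2, h3, h4, h5⟩ := h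
  let G : K → Gate N := fun k => ⟨c k, t k, h1 k, h2 k⟩
  have hD : DepthOne ((Finset.univ : Finset K).toList.map G) := by
    unfold DepthOne
    rw [List.pairwise_map]
    refine List.Pairwise.imp ?_ (Finset.nodup_toList (Finset.univ : Finset K))
    intro a b hab
    obtain ⟨a1, a2, a3⟩ := h3 a b hab
    obtain ⟨b1, b2, b3⟩ := h3 b a (Ne.symm hab)
    rw [Finset.disjoint_insert_left, Finset.disjoint_insert_right]
    simp only [G, Finset.mem_insert, not_or]
    exact ⟨⟨a1, a2⟩, b2, a3⟩
  refine ⟨_, hD, fun x => ?_⟩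
  obtain ⟨e1, e2⟩ := eval_depthOne _ hD (v x)
  funext i
  by_cases hi : ∃ k, t k = i
  · obtain ⟨k, rfl⟩ := hi
    rw [h4]
    have := e1 (G k) (by simp)
    rw [show t k = (G k).t from rfl, this]
    congr 1
    simp only [G]
    congr 1
  · push Not at hi
    rw [h5 x i hi]
    apply e2
    intro g hg
    simp only [List.mem_map, Finset.mem_toList, Finset.mem_univ, true_and] at hg
    obtain ⟨k, rfl⟩ := hg
    exact hi k

theorem Reach.circuit {X : Type} {N d : ℕ} {v w : X → Fin N → Bool} (h : Reach d v w) :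
    ∃ parts : List (Circuit N), parts.length = d ∧ (∀ p ∈ parts, DepthOne p) ∧
      ∀ x, Circuit.eval parts.flatten (v x) = w x := by
  induction h with
  | refl v => exact ⟨[], rfl, by simp, fun x => rfl⟩
  | head s _ ih =>
    obtain ⟨S, hS, hS'⟩ := s.circuit
    obtain ⟨ps, p1, p2, p3⟩ := ih
    refine ⟨S :: ps, by simp [p1], ?_, ?_⟩
    · intro p hp
      rcases List.mem_cons.1 hp with rfl | hp
      · exact hS
      · exact p2 p hp
    · intro x
      rw [← p3 x, ← hS' x]
      simp [Circuit.eval, List.foldl_append]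

theorem exists_perm_extend {N n : ℕ} (hn : n ≤ N) (o : Fin n → Fin N) (ho : Injective o) :
    ∃ π : Equiv.Perm (Fin N), ∀ j : Fin n, ∀ hj : (j : ℕ) < N, π ⟨j, hj⟩ = o j := by
  classical
  let i : Fin n → Fin N := Fin.castLE hn
  have hi : Injective i := Fin.castLE_injective hn
  let e : {x // x ∈ Set.range i} ≃ {x // x ∈ Set.range o} :=
    (Equiv.ofInjective i hi).symm.trans (Equiv.ofInjective o ho)
  refine ⟨e.extendSubtype, fun j hj => ?_⟩
  have hm : (⟨j, hj⟩ : Fin N) ∈ Set.range i := ⟨j, rfl⟩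
  rw [Equiv.extendSubtype_apply_of_mem e _ hm]
  have : (Equiv.ofInjective i hi).symm ⟨⟨j, hj⟩, hm⟩ = j := by
    rw [Equiv.symm_apply_eq]; rfl
  simp [e, this]

theorem Comp.dmin {n d q : ℕ} {f : (Fin n → Bool) → Fin n → Bool}
    (h : Comp d q (fun x : Fin n → Bool => x) f) : Dmin n q f ≤ d := by
  obtain ⟨R, hR, d', w, out, h1, h2, h3, h4, h5⟩ := h
  obtain ⟨em⟩ : Nonempty (R ↪ Fin q) := by
    apply Function.Embedding.nonempty_of_card_le; simpa using h1
  let e : Fin n ⊕ R → Fin (n + q) := Sum.elim (Fin.castAdd q) (fun r => Fin.natAdd n (em r))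
  have he : Injective e := by
    rintro (a | a) (b | b) hab
    · simpa [e] using hab
    · have := congrArg Fin.val hab
      simp [e] at this
      omega
    · have := congrArg Fin.val hab
      simp [e] at this
      omega
    · simpa [e] using hab
  have r := h4.map e he (fun x => pad x) (by
    rintro x (a | a)
    · simp [e, pad]
    · simp [e, pad])
  obtain ⟨ps, p1, p2, p3⟩ := r.circuit
  obtain ⟨π, hπ⟩ := exists_perm_extend (Nat.le_add_right n q) (e ∘ out) (he.comp h3)
  have hI : Implements (q := q) ps.flatten f := by
    refine ⟨Nat.le_add_right n q, π, fun x j hj => ?_⟩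
    rw [p3, hπ]
    simp [he.extend_apply, h5]
  have hD : Circuit.D ps.flatten ≤ d :=
    le_trans (Nat.sInf_le (show d' ∈ _ from ⟨ps, p1, rfl, p2⟩)) h2
  exact le_trans (Nat.sInf_le (show Circuit.D ps.flatten ∈ _ from ⟨ps.flatten, hI, rfl⟩)) hD

theorem dsh_le {n d q : ℕ}
    (h : ∀ f : (Fin n → Bool) → Fin n → Bool, Comp d q (fun x : Fin n → Bool => x) f) :
    Dsh n q ≤ d := by
  apply csSup_le'
  rintro _ ⟨f, _, rfl⟩
  exact (h f).dmin

/-! ### Algebra -/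

def xsum : ℕ → (ℕ → Bool) → Bool
  | 0, _ => false
  | r + 1, g => xor (xsum r g) (g r)

theorem xsum_congr {r : ℕ} {g h : ℕ → Bool} (H : ∀ i < r, g i = h i) : xsum r g = xsum r h := by
  induction r with
  | zero => rfl
  | succ r ih => simp only [xsum]; rw [ih (fun i hi => H i (by omega)), H r (by omega)]

theorem xsum_add (a b : ℕ) (g : ℕ → Bool) :
    xsum (a + b) g = xor (xsum a g) (xsum b (fun i => g (a + i))) := by
  induction b with
  | zero => simp [xsum]
  | succ b ih => rw [← Nat.add_assoc]; simp only [xsum, ih, Bool.xor_assoc]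

theorem xsum_mul (p s : ℕ) (g : ℕ → Bool) :
    xsum (p * s) g = xsum p (fun a => xsum s (fun i => g (a * s + i))) := by
  induction p with
  | zero => simp [xsum]
  | succ p ih => rw [Nat.succ_mul, xsum_add, ih]; rfl

theorem xsum_and (r : ℕ) (b : Bool) (g : ℕ → Bool) :
    xsum r (fun i => b && g i) = (b && xsum r g) := by
  induction r with
  | zero => simp [xsum]
  | succ r ih => simp only [xsum, ih]; cases b <;> simp

theorem xsum_single (r i : ℕ) (hi : i < r) (b : Bool) :
    xsum r (fun j => if i = j then b else false) = b := by
  have h0 : ∀ r ≤ i, xsum r (fun j => if i = j then b else false) = false := by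
    intro r hr
    induction r with
    | zero => rfl
    | succ r ih => simp only [xsum]; rw [ih (by omega), if_neg (by omega)]; rfl
  induction r with
  | zero => omega
  | succ r ih =>
    simp only [xsum]
    by_cases h : i = r
    · rw [h0 r (by omega)]; simp [h]
    · rw [ih (by omega)]; simp [h]

def ev : ℕ → (ℕ → Bool) → (ℕ → Bool) → Bool
  | 0, _, c => c 0
  | k + 1, x, c => xor (ev k x c) (x k && ev k x (fun i => c (2 ^ k + i)))

theorem ev_congr {k : ℕ} {x : ℕ → Bool} {c c' : ℕ → Bool} (h : ∀ i < 2 ^ k, c i = c' i) :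
    ev k x c = ev k x c' := by
  induction k generalizing c c' with
  | zero => exact h 0 (by simp)
  | succ k ih =>
    simp only [ev]
    rw [ih (fun i hi => h i (by rw [pow_succ]; omega)),
      ih (c := fun i => c (2 ^ k + i)) (c' := fun i => c' (2 ^ k + i))
        (fun i hi => h _ (by rw [pow_succ]; omega))]

theorem ev_lin (k : ℕ) (x : ℕ → Bool) (b : Bool) (c c' : ℕ → Bool) :
    ev k x (fun i => xor (c i) (b && c' i)) = xor (ev k x c) (b && ev k x c') := by
  induction k generalizing c c' with
  | zero => rfl
  | succ k ih =>
    simp only [ev]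
    rw [ih, ih (fun i => c (2 ^ k + i)) (fun i => c' (2 ^ k + i))]
    generalize ev k x c = a1
    generalize ev k x c' = a2
    generalize ev k x (fun i => c (2 ^ k + i)) = a3
    generalize ev k x (fun i => c' (2 ^ k + i)) = a4
    generalize x k = a5
    clear ih
    revert a1 a2 a3 a4 a5 b
    decide

theorem ev_succ' (k : ℕ) (x : ℕ → Bool) (c : ℕ → Bool) :
    ev (k + 1) x c = ev k x (fun i => xor (c i) (x k && c (2 ^ k + i))) := by
  rw [ev_lin k x (x k) c (fun i => c (2 ^ k + i))]; rfl

theorem ev_add (k m : ℕ) (x : ℕ → Bool) (c : ℕ → Bool) :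
    ev (k + m) x c =
      ev m (fun i => x (k + i)) (fun u => ev k x (fun i => c (2 ^ k * u + i))) := by
  induction m generalizing c with
  | zero => simp [ev]
  | succ m ih =>
    rw [← Nat.add_assoc]
    simp only [ev]
    rw [ih, ih (fun i => c (2 ^ (k + m) + i))]
    congr 3
    funext u
    congr 1
    funext i
    congr 1
    rw [pow_add]; ring

theorem ev_exists (k : ℕ) (f : (Fin k → Bool) → Bool) :
    ∃ c : ℕ → Bool, ∀ x : ℕ → Bool, ev k x c = f (fun i => x i) := by
  induction k with
  | zero =>
    refine ⟨fun _ => f Fin.elim0, fun x => ?_⟩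
    simp only [ev]
    congr 1
    funext i
    exact i.elim0
  | succ k ih =>
    obtain ⟨c0, h0⟩ := ih (fun u => f (Fin.snoc (α := fun _ => Bool) u false))
    obtain ⟨c1, h1⟩ := ih (fun u => xor (f (Fin.snoc (α := fun _ => Bool) u false))
      (f (Fin.snoc (α := fun _ => Bool) u true)))
    refine ⟨fun i => if i < 2 ^ k then c0 i else c1 (i - 2 ^ k), fun x => ?_⟩
    simp only [ev]
    have e0 : ev k x (fun i => if i < 2 ^ k then c0 i else c1 (i - 2 ^ k)) = ev k x c0 :=
      ev_congr (fun i hi => by simp [hi])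
    have e1 : ev k x (fun i => if 2 ^ k + i < 2 ^ k then c0 (2 ^ k + i)
        else c1 (2 ^ k + i - 2 ^ k)) = ev k x c1 :=
      ev_congr (fun i hi => by simp)
    rw [e0, e1, h0, h1]
    have : (fun i : Fin (k + 1) => x i) =
        Fin.snoc (α := fun _ => Bool) (fun i : Fin k => x i) (x k) := by
      funext i
      refine Fin.lastCases ?_ (fun j => ?_) i
      · simp
      · simp
    rw [this]
    cases x k <;> simp

def mono : ℕ → (ℕ → Bool) → ℕ → Bool
  | 0, _, _ => true
  | k + 1, x, i => if i < 2 ^ k then mono k x i else x k && mono k x (i - 2 ^ k)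

theorem ev_eq_xsum (k : ℕ) (x : ℕ → Bool) (c : ℕ → Bool) :
    ev k x c = xsum (2 ^ k) (fun i => c i && mono k x i) := by
  induction k generalizing c with
  | zero => simp [ev, xsum, mono]
  | succ k ih =>
    simp only [ev]
    rw [pow_succ, Nat.mul_two, xsum_add, ih, ih, ← xsum_and]
    congr 1
    · exact xsum_congr (fun i hi => by simp [mono, hi])
    · apply xsum_congr
      intro i hi
      simp only [mono]
      rw [if_neg (by omega), Nat.add_sub_cancel_left]
      cases x k <;> cases c (2 ^ k + i) <;> simp

/-! ### Building blocks -/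

theorem exists_rank {T E : Type} [Fintype T] (φ : T → E) :
    ∃ rk : T → ℕ, (∀ t t', φ t = φ t' → rk t = rk t' → t = t') ∧
      (∀ t, ∀ r < rk t, ∃ t', φ t' = φ t ∧ rk t' = r) ∧
      (∀ t, rk t < Nat.card {t' // φ t' = φ t}) := by
  classical
  let q : ∀ e, {t // φ t = e} ≃ Fin (Nat.card {t // φ t = e}) := fun e => Finite.equivFin _
  let rk : T → ℕ := fun t => q (φ t) ⟨t, rfl⟩
  have hq : ∀ e (t) (h : φ t = e), rk t = q e ⟨t, h⟩ := by
    rintro e t rfl; rfl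
  refine ⟨rk, ?_, ?_, fun t => (q (φ t) ⟨t, rfl⟩).2⟩
  · intro t t' h h'
    rw [hq (φ t') t h, hq (φ t') t' rfl] at h'
    have := (q (φ t')).injective (Fin.ext h')
    exact congrArg Subtype.val this
  · intro t r hr
    have hr' : r < Nat.card {t' // φ t' = φ t} := hr.trans (q (φ t) ⟨t, rfl⟩).2
    refine ⟨((q (φ t)).symm ⟨r, hr'⟩).1, ((q (φ t)).symm ⟨r, hr'⟩).2, ?_⟩
    rw [hq (φ t) _ ((q (φ t)).symm ⟨r, hr'⟩).2]
    simp

theorem fanout {X κ T : Type} [Fintype T] (L : ℕ) (hL : Fintype.card T ≤ 2 ^ L)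
    (F : X → κ → Bool) (φ : T → κ) :
    Comp (L + 1) (Fintype.card T) F (fun x => Sum.elim (F x) (fun t => F x (φ t))) := by
  classical
  obtain ⟨rk, h1, h2, h3⟩ := exists_rank φ
  have h3' : ∀ t, rk t < 2 ^ L := fun t => by
    refine lt_of_lt_of_le (h3 t) (le_trans ?_ hL)
    rw [← Nat.card_eq_fintype_card]
    exact Finite.card_subtype_le _
  let cfg : ℕ → X → κ ⊕ T → Bool := fun k x =>
    Sum.elim (F x) (fun t => if rk t < 2 ^ k then F x (φ t) else false)
  have hs0 : Step (fun x => Sum.elim (F x) (fun _ => false)) (cfg 0) := by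
    refine step_one (K := {t // rk t = 0}) _ _ (fun t => Sum.inr t.1) (fun t => Sum.inl (φ t.1))
      ?_ ?_ ?_ ?_ ?_
    · intro a b h; exact Subtype.ext (Sum.inr_injective h)
    · intro a b h
      exact Subtype.ext (h1 _ _ (Sum.inl_injective h) (a.2.trans b.2.symm))
    · intro a b; simp
    · intro x t; simp [cfg, t.2]
    · rintro x (a | t) h
      · simp [cfg]
      · have : rk t ≠ 0 := fun h0 => h ⟨t, h0⟩ rfl
        simp [cfg, this]
  have hs : ∀ k, Step (cfg k) (cfg (k + 1)) := by
    intro k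
    have hp : ∀ t : {t // 2 ^ k ≤ rk t ∧ rk t < 2 ^ (k + 1)},
        ∃ t', φ t' = φ t.1 ∧ rk t' = rk t.1 - 2 ^ k := fun t =>
      h2 t.1 _ (by have := t.2.1; have := Nat.two_pow_pos k; omega)
    choose pr hp1 hp2 using hp
    have hp3 : ∀ t, rk (pr t) < 2 ^ k := fun t => by
      rw [hp2]; have h := t.2.2; have := t.2.1; have e := pow_succ 2 k; omega
    refine step_one (K := {t // 2 ^ k ≤ rk t ∧ rk t < 2 ^ (k + 1)}) _ _
      (fun t => Sum.inr t.1) (fun t => Sum.inr (pr t)) ?_ ?_ ?_ ?_ ?_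
    · intro a b h; exact Subtype.ext (Sum.inr_injective h)
    · intro a b h
      have h := Sum.inr_injective h
      refine Subtype.ext (h1 _ _ ?_ ?_)
      · rw [← hp1, ← hp1, h]
      · have ea := hp2 a
        have eb := hp2 b
        rw [h] at ea
        have := a.2.1; have := b.2.1
        omega
    · intro a b h
      have h := Sum.inr_injective h
      have := hp3 b
      rw [← h] at this
      have := a.2.1
      omega
    · intro x t
      have := t.2
      simp [cfg, hp3, hp1, t.2.2, Nat.not_lt.2 t.2.1]
    · rintro x (a | t) h
      · simp [cfg]
      · have : ¬ (2 ^ k ≤ rk t ∧ rk t < 2 ^ (k + 1)) := fun h0 => h ⟨t, h0⟩ rfl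
        simp only [cfg, Sum.elim_inr]
        by_cases hk : rk t < 2 ^ k
        · rw [if_pos hk, if_pos (by rw [pow_succ]; omega)]
        · rw [if_neg hk, if_neg (by omega)]
  have hr : ∀ k, Reach (k + 1) (fun x => Sum.elim (F x) (fun _ => false)) (cfg k) := by
    intro k
    induction k with
    | zero => exact Reach.head hs0 (Reach.refl _)
    | succ k ih => exact ih.tail (hs k)
  refine ⟨T, inferInstance, L + 1, cfg L, id, le_rfl, le_rfl, injective_id, hr L, ?_⟩
  rintro x (a | t)
  · rfl
  · simp [cfg, h3']

theorem serial {X κ T : Type} [Fintype T] (r : ℕ) (F : X → κ → Bool) (src : ℕ → T → Option κ)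
    (hsrc : ∀ i < r, ∀ t t' k, src i t = some k → src i t' = some k → t = t') :
    Comp r (Fintype.card T) F
      (fun x => Sum.elim (F x) (fun t => xsum r (fun i => (src i t).elim false (F x)))) := by
  classical
  let cfg : ℕ → X → κ ⊕ T → Bool := fun j x =>
    Sum.elim (F x) (fun t => xsum j (fun i => (src i t).elim false (F x)))
  have hs : ∀ j < r, Step (cfg j) (cfg (j + 1)) := by
    intro j hj
    have hg : ∀ t : {t // (src j t).isSome}, src j t.1 = some ((src j t.1).get t.2) := fun t => by
      simp
    refine step_one (K := {t // (src j t).isSome}) _ _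
      (fun t => Sum.inr t.1) (fun t => Sum.inl ((src j t.1).get t.2)) ?_ ?_ ?_ ?_ ?_
    · intro a b h; exact Subtype.ext (Sum.inr_injective h)
    · intro a b h
      have h := Sum.inl_injective h
      refine Subtype.ext (hsrc j hj _ _ _ (hg a) ?_)
      rw [h]; exact hg b
    · intro a b; simp
    · intro x t
      simp only [cfg, Sum.elim_inr, Sum.elim_inl, xsum]
      congr 1
      conv_lhs => rw [hg t]
      rfl
    · rintro x (a | t) h
      · simp [cfg]
      · have : src j t = none := by
          by_contra h0
          exact h ⟨t, Option.isSome_iff_ne_none.2 h0⟩ rfl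
        simp [cfg, xsum, this]
  have hr : ∀ k ≤ r, Reach k (fun x => Sum.elim (F x) (fun _ => false)) (cfg k) := by
    intro k
    induction k with
    | zero => intro _; exact Reach.refl _
    | succ k ih => intro hk; exact (ih (by omega)).tail (hs k (by omega))
  exact ⟨T, inferInstance, r, cfg r, id, le_rfl, le_rfl, injective_id, hr r le_rfl, fun x k => rfl⟩

theorem and_fresh {X κ T : Type} [Fintype T] (F : X → κ → Bool) (φ ψ : T → κ)
    (hφ : Injective φ) (hψ : Injective ψ) (h : ∀ t t', φ t ≠ ψ t') :
    Comp 1 (Fintype.card T) F (fun x => Sum.elim (F x) (fun t => F x (φ t) && F x (ψ t))) := by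
  refine ⟨T, inferInstance, 1, fun x => Sum.elim (F x) (fun t => F x (φ t) && F x (ψ t)), id,
    le_rfl, le_rfl, injective_id, Reach.head ?_ (Reach.refl _), fun x k => rfl⟩
  refine step_two (K := T) _ _ Sum.inr (fun t => Sum.inl (φ t)) (fun t => Sum.inl (ψ t))
    Sum.inr_injective (Sum.inl_injective.comp hφ) (Sum.inl_injective.comp hψ) ?_ ?_ ?_ ?_ ?_
  · intro a b; simp
  · intro a b; simp
  · intro a b h'; exact h a b (Sum.inl_injective h')
  · intro x t; simp
  · rintro x (a | t) h'
    · simp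
    · exact absurd rfl (h' t)

theorem mux_reach {X ι J : Type} [Fintype J] (M m : ℕ) (hm : 2 ^ m ≤ M)
    (acc cp : J × Fin M → ι) (hacc : Injective acc) (hcp : Injective cp)
    (hd : ∀ a b, acc a ≠ cp b) (y : X → ℕ → Bool) (v : X → ι → Bool)
    (hv : ∀ x j (u : Fin M), u.1 < 2 ^ m → u.1 ≠ 0 → v x (cp (j, u)) = y x (Nat.log 2 u)) :
    ∃ w, Reach m v w ∧ ∀ x j (h0 : 0 < M), w x (acc (j, ⟨0, h0⟩)) =
      ev m (y x) (fun u => if h : u < M then v x (acc (j, ⟨u, h⟩)) else false) := by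
  classical
  induction m generalizing v with
  | zero => exact ⟨v, Reach.refl _, fun x j h0 => by simp [ev, h0]⟩
  | succ m ih =>
    rw [pow_succ] at hm hv
    let t : J × Fin (2 ^ m) → ι := fun p => acc (p.1, ⟨p.2, by omega⟩)
    let a : J × Fin (2 ^ m) → ι := fun p => acc (p.1, ⟨2 ^ m + p.2, by omega⟩)
    let b : J × Fin (2 ^ m) → ι := fun p => cp (p.1, ⟨2 ^ m + p.2, by omega⟩)
    have ht : Injective t := by
      rintro ⟨j, u⟩ ⟨j', u'⟩ h
      have := hacc h
      simp only [Prod.mk.injEq, Fin.mk.injEq] at this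
      exact Prod.ext this.1 (Fin.ext this.2)
    let v1 : X → ι → Bool := fun x =>
      Function.extend t (fun p => xor (v x (t p)) (v x (a p) && v x (b p))) (v x)
    have hs : Step v v1 := by
      refine step_two _ _ t a b ht ?_ ?_ ?_ ?_ ?_ ?_ ?_
      · rintro ⟨j, u⟩ ⟨j', u'⟩ h
        have := hacc h
        simp only [Prod.mk.injEq, Fin.mk.injEq] at this
        exact Prod.ext this.1 (Fin.ext (by have := this.2; simp only; omega))
      · rintro ⟨j, u⟩ ⟨j', u'⟩ h
        have := hcp h
        simp only [Prod.mk.injEq, Fin.mk.injEq] at this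
        exact Prod.ext this.1 (Fin.ext (by have := this.2; simp only; omega))
      · rintro ⟨j, u⟩ ⟨j', u'⟩ h
        have := hacc h
        simp only [Prod.mk.injEq, Fin.mk.injEq] at this
        omega
      · intro p p'; exact hd _ _
      · intro p p'; exact hd _ _
      · intro x p; simp [v1, ht.extend_apply]
      · intro x i hi
        simp only [v1]
        rw [Function.extend_apply']
        rintro ⟨p, hp⟩; exact hi p hp
    have hv1 : ∀ x p, v1 x (cp p) = v x (cp p) := by
      intro x p
      simp only [v1]
      rw [Function.extend_apply']
      rintro ⟨p', hp⟩; exact hd _ _ hp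
    obtain ⟨w, hw, hw'⟩ := ih (by omega) v1 (fun x j u hu hu0 => by
      rw [hv1]; exact hv x j u (by omega) hu0)
    refine ⟨w, Reach.head hs hw, fun x j h0 => ?_⟩
    rw [hw', ev_succ']
    apply ev_congr
    intro u hu
    have e1 : u < M := by omega
    have e2 : 2 ^ m + u < M := by omega
    simp only [e1, e2, dif_pos]
    have := ht.extend_apply (fun p => xor (v x (t p)) (v x (a p) && v x (b p))) (v x) (j, ⟨u, hu⟩)
    simp only [v1]
    change Function.extend t _ (v x) (t (j, ⟨u, hu⟩)) = _
    rw [this]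
    simp only [t, a, b]
    rw [hv x j ⟨2 ^ m + u, e2⟩ (by simp; omega) (by simp)]
    have hl : Nat.log 2 (2 ^ m + u) = m := by
      rw [Nat.log_eq_iff (Or.inr ⟨by simp, by positivity⟩)]
      rw [pow_succ]; omega
    simp only [hl]
    rw [Bool.and_comm]

theorem mux {X κ J : Type} [Fintype J] (m : ℕ) (acc cp : J × Fin (2 ^ m) → κ)
    (hacc : Injective acc) (hcp : Injective cp)
    (hd : ∀ a b, acc a ≠ cp b) (y : X → ℕ → Bool) (F : X → κ → Bool)
    (hF : ∀ x j (u : Fin (2 ^ m)), u.1 ≠ 0 → F x (cp (j, u)) = y x (Nat.log 2 u)) :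
    Comp m 0 F (fun x j =>
      ev m (y x) (fun u => if h : u < 2 ^ m then F x (acc (j, ⟨u, h⟩)) else false)) := by
  obtain ⟨w, hw, hw'⟩ := mux_reach (ι := κ ⊕ Empty) (2 ^ m) m le_rfl (Sum.inl ∘ acc) (Sum.inl ∘ cp)
    (Sum.inl_injective.comp hacc) (Sum.inl_injective.comp hcp)
    (fun a b h => hd a b (Sum.inl_injective h)) y
    (fun x => Sum.elim (F x) (fun _ => false)) (fun x j u _ hu => by simpa using hF x j u hu)
  refine ⟨Empty, inferInstance, m, w, fun j => Sum.inl (acc (j, ⟨0, by positivity⟩)), by simp, le_rfl,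
    ?_, hw, fun x j => ?_⟩
  · intro j j' h
    have := hacc (Sum.inl_injective h)
    simpa using this
  · have := hw' x j (by positivity)
    simpa using this

/-- Extension of an input vector to a sequence. -/
def ext {n : ℕ} (x : Fin n → Bool) : ℕ → Bool := fun i => if h : i < n then x ⟨i, h⟩ else false

theorem mono_comp (n k : ℕ) (hk : k ≤ n) :
    Comp ((k + 1) ^ 2) (2 * 2 ^ k) (fun x : Fin n → Bool => x)
      (fun x => Sum.elim x (fun i : Fin (2 ^ k) => mono k (ext x) i)) := by
  induction k with
  | zero =>
    refine ⟨Unit, inferInstance, 1, fun x => Sum.elim x (fun _ => true),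
      Sum.elim Sum.inl (fun _ => Sum.inr ()), by simp, by simp, ?_,
      Reach.head ?_ (Reach.refl _), ?_⟩
    · rintro (a | a) (b | b) h
      · simpa using h
      · simp at h
      · simp at h
      · congr 1; exact Fin.ext (by have := a.2; have := b.2; simp at *)
    · refine ⟨Unit, inferInstance, fun _ => Sum.inr (), fun _ => ∅, ?_, ?_, ?_, ?_, ?_⟩
      · simp
      · simp
      · intro a b h; exact absurd rfl h
      · simp
      · rintro x (a | a) h
        · simp
        · exact absurd rfl (h ())
    · rintro x (a | a) <;> simp [mono]
  | succ k ih =>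
    have h1 := ih (by omega)
    have h2 := h1.trans (fanout (T := Fin (2 ^ k)) k (by simp) _ (fun _ => Sum.inl ⟨k, by omega⟩))
    have h3 := h2.trans (and_fresh (T := Fin (2 ^ k)) _ (fun i => Sum.inr i)
      (fun i => Sum.inl (Sum.inr i)) Sum.inr_injective
      (Sum.inl_injective.comp Sum.inr_injective) (by simp))
    refine (h3.mono (d' := (k + 1 + 1) ^ 2) (m' := 2 * 2 ^ (k + 1)) (by ring_nf; omega)
      (by simp only [Fintype.card_fin, pow_succ]; omega)).reindex _
      (Sum.elim (fun i => Sum.inl (Sum.inl (Sum.inl i)))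
        (fun i => if h : i.1 < 2 ^ k then Sum.inl (Sum.inl (Sum.inr ⟨i, h⟩))
          else Sum.inr ⟨i - 2 ^ k, by have := i.2; have e := pow_succ 2 k; omega⟩)) ?_ ?_
    · rintro (a | a) (b | b) h
      · simpa using h
      · simp only [Sum.elim_inl, Sum.elim_inr] at h
        split_ifs at h <;> simp at h
      · simp only [Sum.elim_inl, Sum.elim_inr] at h
        split_ifs at h <;> simp at h
      · simp only [Sum.elim_inr] at h
        congr 1
        apply Fin.ext
        split_ifs at h <;> simp at h <;> omega
    · rintro x (a | a)
      · simp
      · simp only [Sum.elim_inr, mono]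
        split_ifs with h
        · simp
        · have : k < n := by omega
          simp [ext, this]

theorem split_fibers {T E : Type} [Fintype T] [Fintype E] (g : T → E) (l : ℕ) (hl : 0 < l) :
    ∃ (C : Type) (_ : Fintype C) (φ : C → E) (cp : T → C) (sl : T → ℕ),
      (∀ t, φ (cp t) = g t) ∧ (∀ t, sl t < l) ∧
      (∀ t t', cp t = cp t' → sl t = sl t' → t = t') ∧
      l * Fintype.card C ≤ Fintype.card T + l * Fintype.card E := by
  classical
  obtain ⟨rk, h1, -, h3⟩ := exists_rank g
  refine ⟨Σ e : E, Fin (Nat.card {t // g t = e} / l + 1), inferInstance, fun c => c.1,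
    fun t => ⟨g t, ⟨rk t / l, Nat.lt_succ_of_le (Nat.div_le_div_right (h3 t).le)⟩⟩,
    fun t => rk t % l, fun t => rfl, fun t => Nat.mod_lt _ hl, ?_, ?_⟩
  · intro t t' h h'
    have e1 : g t = g t' := congrArg Sigma.fst h
    have e2 : rk t / l = rk t' / l := congrArg (fun c : (Σ e : E, Fin (Nat.card {t // g t = e} / l + 1)) => (c.2 : ℕ)) h
    have h2 : rk t % l = rk t' % l := h'
    refine h1 t t' e1 ?_
    rw [← Nat.div_add_mod (rk t) l, ← Nat.div_add_mod (rk t') l, e2, h2]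
  · have hT : Fintype.card T = ∑ e : E, Nat.card {t // g t = e} := by
      rw [← Fintype.card_congr (Equiv.sigmaFiberEquiv g), Fintype.card_sigma]
      simp
    rw [Fintype.card_sigma, hT, Finset.mul_sum]
    have hE : l * Fintype.card E = ∑ e : E, l := by simp [mul_comm]
    rw [hE, ← Finset.sum_add_distrib]
    apply Finset.sum_le_sum
    intro e _
    rw [Fintype.card_fin, Nat.mul_add, Nat.mul_one]
    exact Nat.add_le_add_right (Nat.mul_div_le _ _) _

theorem table_comp (n b s : ℕ) (hs : s = 2 ^ b) (hk : b + 6 ≤ n) :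
    Comp ((b + 7) ^ 2 + (b + 6 + s + 1) + s) (2 * 2 ^ (b + 6) + s * (64 * 2 ^ s) + 64 * 2 ^ s)
      (fun x : Fin n → Bool => x)
      (fun x => Sum.elim x (fun t : Fin 64 × (Fin s → Bool) =>
        xsum s (fun i => (if h : i < s then t.2 ⟨i, h⟩ else false) &&
          mono (b + 6) (ext x) (t.1 * s + i)))) := by
  have hps : 2 ^ (b + 6) = 64 * s := by rw [pow_add, hs]; ring
  have hidx : ∀ (i : Fin s) (a : Fin 64), a.1 * s + i.1 < 2 ^ (b + 6) := by
    intro i a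
    have h1 := i.2
    have h2 : a.1 * s ≤ 63 * s := Nat.mul_le_mul_right s (by omega)
    omega
  have c1 := mono_comp n (b + 6) hk
  have c2 := c1.trans (fanout (T := Fin s × (Fin 64 × (Fin s → Bool))) (b + 6 + s)
    (by simp only [Fintype.card_prod, Fintype.card_fin, Fintype.card_pi, Fintype.card_bool,
          Finset.prod_const, Finset.card_univ]
        rw [pow_add, hps]; apply le_of_eq; ring) _
    (fun p => Sum.inr ⟨p.2.1 * s + p.1, hidx p.1 p.2.1⟩))
  have c3 := c2.trans (serial (T := Fin 64 × (Fin s → Bool)) s _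
    (fun i t => if h : i < s then (if t.2 ⟨i, h⟩ then some (Sum.inr (⟨i, h⟩, t)) else none)
      else none) (by
        intro i hi t t' k h h'
        simp only [hi, dif_pos] at h h'
        split_ifs at h h'
        simp only [Option.some.injEq] at h h'
        rw [← h'] at h
        simpa using h))
  refine (c3.mono le_rfl ?_).reindex _ (Sum.elim (fun i => Sum.inl (Sum.inl (Sum.inl i))) Sum.inr)
    ?_ ?_
  · simp
  · rintro (a | a) (b | b) h <;> simpa using h
  · rintro x (a | t)
    · simp
    · simp only [Sum.elim_inr]
      apply xsum_congr
      intro i hi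
      simp only [hi, dif_pos]
      cases t.2 ⟨i, hi⟩ <;> simp

theorem main_comp (n b m s : ℕ) (hs : s = 2 ^ b) (hn : n = b + 6 + m) (hm : 0 < m)
    (hM : 2 * (n * 2 ^ m) + 64 * 2 ^ s ≤ 2 ^ n)
    (f : (Fin n → Bool) → Fin n → Bool) :
    Comp ((b + 7) ^ 2 + (b + 6 + s + 1) + s + (n + 1) + 4096 + m)
      (2 * 2 ^ (b + 6) + s * (64 * 2 ^ s) + 64 * 2 ^ s + (2 * (n * 2 ^ m) + 64 * 2 ^ s) + n * 2 ^ m)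
      (fun x : Fin n → Bool => x) f := by
  classical
  obtain ⟨N, hN⟩ : ∃ N : ℕ, N = 64 * 64 := ⟨_, rfl⟩
  have hps : 2 ^ (b + 6) = 64 * s := by rw [pow_add, hs]; ring
  choose c hc using fun j : Fin n => ev_exists n (fun x => f x j)
  let T := Fin n × Fin (2 ^ m)
  let E := Fin s → Bool
  let g : Fin 64 → T → E := fun a t i => c t.1 (2 ^ (b + 6) * t.2 + (a * s + i))
  choose C hC φ cp sl h1 h2 h3 h4 using fun a => split_fibers (g a) 64 (by norm_num)
  have hcardT : Fintype.card T = n * 2 ^ m := by simp [T]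
  have hcardE : Fintype.card E = 2 ^ s := by simp [E]
  have hcardC : Fintype.card (Σ a, C a) ≤ n * 2 ^ m + 64 * 2 ^ s := by
    rw [Fintype.card_sigma]
    have : 64 * ∑ a, Fintype.card (C a) ≤ 64 * (n * 2 ^ m + 64 * 2 ^ s) := by
      rw [Finset.mul_sum]
      calc _ ≤ ∑ a : Fin 64, (n * 2 ^ m + 64 * 2 ^ s) := by
            apply Finset.sum_le_sum
            intro a _
            have := h4 a
            rw [hcardT, hcardE] at this
            exact this
        _ = _ := by simp
    omega
  have hcard4 : Fintype.card (T ⊕ (Σ a, C a)) ≤ 2 * (n * 2 ^ m) + 64 * 2 ^ s := by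
    rw [Fintype.card_sum, hcardT]; omega
  have hlog : ∀ w : Fin (2 ^ m), b + 6 + Nat.log 2 w < n := by
    intro w
    rw [hn]
    by_cases hw : w.1 = 0
    · simp [hw]; exact hm
    · have := Nat.log_lt_of_lt_pow hw w.2
      omega
  have c1 := table_comp n b s hs (by omega)
  have c2 := c1.trans (fanout (T := T ⊕ (Σ a, C a)) n (hcard4.trans hM) _
    (Sum.elim (fun t => Sum.inl ⟨b + 6 + Nat.log 2 t.2, hlog t.2⟩)
      (fun q => Sum.inr (q.1, φ q.1 q.2))))
  have c3 := c2.trans (serial (T := T) N _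
    (fun i t => if h : i / 64 < 64 then
      (if sl ⟨i / 64, h⟩ t = i % 64 then some (Sum.inr (Sum.inr ⟨⟨i / 64, h⟩, cp ⟨i / 64, h⟩ t⟩))
        else none) else none) (by
        intro i hi t t' k h h'
        have hi' : i / 64 < 64 := by omega
        simp only [hi', dif_pos] at h h'
        split_ifs at h h' with e1 e2
        simp only [Option.some.injEq] at h h'
        rw [← h'] at h
        have h := Sum.inr_injective (Sum.inr_injective h)
        simp only [Sigma.mk.injEq, heq_eq_eq, true_and] at h
        exact h3 _ _ _ h (e1.trans e2.symm)))
  have c4 := c3.trans (mux (J := Fin n) m Sum.inr (fun p => Sum.inl (Sum.inr (Sum.inl p)))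
    Sum.inr_injective
    (Sum.inl_injective.comp (Sum.inr_injective.comp Sum.inl_injective)) (by simp)
    (fun x i => ext x (b + 6 + i)) _ (by
      intro x j u hu
      have := hlog u
      simp [ext, this]))
  refine (c4.mono (by omega) ?_).reindex _ id injective_id ?_
  · rw [hcardT]; omega
  · intro x j
    simp only [id_eq]
    have hx : (fun i : Fin n => ext x i) = x := by funext i; simp [ext]
    have hf := hc j (ext x)
    rw [hx] at hf
    rw [← hf]
    have hadd := ev_add (b + 6) m (ext x) (c j)
    rw [← hn] at hadd
    rw [hadd]
    apply ev_congr
    intro u hu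
    simp only [hu, dif_pos, Sum.elim_inr]
    rw [ev_eq_xsum, hps, xsum_mul, hN, xsum_mul]
    apply xsum_congr
    intro a ha
    have key : ∀ i < 64, (a * 64 + i) / 64 = a ∧ (a * 64 + i) % 64 = i := by
      intro i hi; omega
    rw [← xsum_single 64 (sl ⟨a, ha⟩ (j, ⟨u, hu⟩)) (h2 _ _)
      (xsum s (fun i => c j (64 * s * u + (a * s + i)) && mono (b + 6) (ext x) (a * s + i)))]
    apply xsum_congr
    intro i hi
    obtain ⟨k1, k2⟩ := key i hi
    simp only [k1, k2, ha, dif_pos]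
    by_cases hsl : sl ⟨a, ha⟩ (j, ⟨u, hu⟩) = i
    · rw [if_pos hsl, if_pos hsl]
      simp only [Option.elim_some, Sum.elim_inr, h1]
      apply xsum_congr
      intro i' hi'
      simp only [hi', dif_pos, g, hps, k1]
    · rw [if_neg hsl, if_neg hsl]
      rfl

theorem param_bound (b : ℕ) (hb : 15 ≤ b) : 4 * (b + 10) ^ 2 + 20000 ≤ 2 ^ b := by
  induction b, hb using Nat.le_induction with
  | base => norm_num
  | succ b hb ih =>
    have e : 2 ^ (b + 1) = 2 ^ b * 2 := pow_succ 2 b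
    nlinarith

theorem dsh_bound (n : ℕ) (hn : 2 ^ 17 ≤ n) : Dsh n (2 ^ n) ≤ 3 * n := by
  set b := Nat.log 2 (n / 4) with hb
  have hb15 : 15 ≤ b := by
    rw [hb]; apply Nat.le_log_of_pow_le (by norm_num); omega
  have h1 : 2 ^ b ≤ n / 4 := Nat.pow_log_le_self 2 (by omega)
  have h2 : n / 4 < 2 ^ b * 2 := by
    rw [← pow_succ]
    exact Nat.lt_pow_succ_log_self (by norm_num) _
  have hp := param_bound b hb15
  have hbn : b + 6 + 100 < n := by
    have : b + 10 ≤ (b + 10) ^ 2 := Nat.le_self_pow (by norm_num) _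
    omega
  obtain ⟨m, hm⟩ : ∃ m, n = b + 6 + m := ⟨n - (b + 6), by omega⟩
  obtain ⟨s, hs⟩ : ∃ s, s = 2 ^ b := ⟨_, rfl⟩
  rw [← hs] at h1 h2 hp
  -- size of the accumulator array
  have hA : 8 * (n * 2 ^ m) ≤ 2 ^ n := by
    have : 2 ^ n = 64 * s * 2 ^ m := by rw [hm, pow_add, pow_add, hs]; ring
    rw [this]
    calc 8 * (n * 2 ^ m) = (8 * n) * 2 ^ m := by ring
      _ ≤ _ := Nat.mul_le_mul_right _ (by omega)
  have hS : s * (64 * 2 ^ s) * 8 * 8 ≤ 2 ^ n := by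
    have e1 : s ≤ 2 ^ s := Nat.lt_two_pow_self.le
    calc s * (64 * 2 ^ s) * 8 * 8 ≤ 2 ^ s * (64 * 2 ^ s) * 8 * 8 := by gcongr
      _ = 2 ^ (s + s + 12) := by rw [pow_add, pow_add]; ring
      _ ≤ 2 ^ n := Nat.pow_le_pow_right (by norm_num) (by omega)
  have hS' : 64 * 2 ^ s ≤ s * (64 * 2 ^ s) := Nat.le_mul_of_pos_left _ (by omega)
  have hK : 2 * 2 ^ (b + 6) ≤ s * (64 * 2 ^ s) := by
    have e1 : 2 ≤ 2 ^ s := Nat.le_self_pow (by omega) 2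
    rw [pow_add, ← hs]
    nlinarith
  apply dsh_le
  intro f
  refine (main_comp n b m s hs hm (by omega) (by omega) f).mono ?_ (by omega)
  have : (b + 7) ^ 2 ≤ (b + 10) ^ 2 := Nat.pow_le_pow_left (by omega) 2
  have : b + 10 ≤ (b + 10) ^ 2 := Nat.le_self_pow (by norm_num) _
  omega

/-- There is a sequence `q₁(n) ~ 2ⁿ` such that `D(n, q₁(n)) ≲ 3n`. -/
theorem depth_upper_with_memory_3n :
    ∃ q₁ : ℕ → ℕ,
      AsympEquiv (fun n => (q₁ n : ℝ)) (fun n => (2 : ℝ) ^ n) ∧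
      AsympLE (fun n => (Dsh n (q₁ n) : ℝ)) (fun n => 3 * (n : ℝ)) := by
  refine ⟨fun n => 2 ^ n, ?_, ?_⟩
  · unfold AsympEquiv
    have : (fun n : ℕ => (((2 ^ n : ℕ) : ℝ)) / (2 : ℝ) ^ n) = fun _ => 1 := by
      funext n
      push_cast
      exact div_self (by positivity)
    rw [this]
    exact tendsto_const_nhds
  · unfold AsympLE
    refine Filter.limsup_le_of_le ?_ ?_
    · refine Filter.isCoboundedUnder_le_of_le atTop (x := 0) (fun n => by positivity)
    · filter_upwards [Filter.eventually_ge_atTop (2 ^ 17)] with n hn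
      apply div_le_one_of_le₀ _ (by positivity)
      exact_mod_cast dsh_bound n hn

end Rev
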